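/- (Brézis–Lieb lemma for the nonlocal term.) Assume N ≥ 2, 0 < α < N and p > (N+α)/N. Let {u_n} be a sequence of functions G → ℝ that is bounded in ℓ^{2Np/(N+α)}(G) and converges pointwise on G to a function u. Then lim_{n→∞} ( Σ_G (R_α ∗ |u_n|^p)|u_n|^p − Σ_G (R_α ∗ |u_n − u|^p)|u_n − u|^p ) = Σ_G (R_α ∗ |u|^p)|u|^p. -/

import Mathlib

open scoped BigOperators ENNReal
open Filter

noncomputable section

namespace Choquard

variable {G : Type*}

/-- The word metric on a group with generating set `S`. -/
def wordDist [Group G] (S : Finset G) (x y : G) : ℕ :=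
  sInf {k : ℕ | ∃ l : List G, (∀ g ∈ l, g ∈ S) ∧ l.length = k ∧ x⁻¹ * y = l.prod}

/-- The closed ball of radius `r` about `c` in the word metric. -/
def ball [Group G] (S : Finset G) (c : G) (r : ℝ) : Set G :=
  {x | (wordDist S x c : ℝ) ≤ r}

/-- Polynomial growth of homogeneous dimension `N`. -/
def PolyGrowth [Group G] (S : Finset G) (N : ℕ) : Prop :=
  ∃ C₁ C₂ : ℝ, 0 < C₁ ∧ 0 < C₂ ∧ ∀ r : ℝ, 1 ≤ r →
    C₁ * r ^ N ≤ ((ball S (1 : G) r).ncard : ℝ) ∧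
    ((ball S (1 : G) r).ncard : ℝ) ≤ C₂ * r ^ N

/-- Riesz-type asymptotics for the kernel `R`. -/
def RieszKernel [Group G] (S : Finset G) (N : ℕ) (α : ℝ) (R : G → G → ℝ) : Prop :=
  (∀ x y, 0 < R x y) ∧
  ∃ c₁ c₂ : ℝ, 0 < c₁ ∧ 0 < c₂ ∧ ∀ x y : G, x ≠ y →
    c₁ * (wordDist S x y : ℝ) ^ (α - (N : ℝ)) ≤ R x y ∧
    R x y ≤ c₂ * (wordDist S x y : ℝ) ^ (α - (N : ℝ))

/-- Convolution `(R ∗ f)(x) = Σ_{y ≠ x} R x y f y`. -/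
def conv [DecidableEq G] (R : G → G → ℝ) (f : G → ℝ) (x : G) : ℝ :=
  ∑' y, if y = x then 0 else R x y * f y

/-- The convolution as an extended-nonnegative-real valued sum. -/
def convE [DecidableEq G] (R : G → G → ℝ) (f : G → ℝ) (x : G) : ℝ≥0∞ :=
  ∑' y, if y = x then 0 else ENNReal.ofReal (R x y * f y)

/-- Membership in `ℓ^q(G)`. -/
def Memlp (q : ℝ) (u : G → ℝ) : Prop := Summable fun x => |u x| ^ q

/-- The `ℓ^q` norm. -/
def lpNorm (q : ℝ) (u : G → ℝ) : ℝ := (∑' x, |u x| ^ q) ^ (1 / q)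

/-- The `ℓ^∞` norm. -/
def supNorm (u : G → ℝ) : ℝ := ⨆ x, |u x|

/-- The graph Laplacian `Δu(x) = Σ_{s ∈ S} (u(xs) - u(x))`. -/
def lap [Group G] (S : Finset G) (u : G → ℝ) (x : G) : ℝ :=
  ∑ s ∈ S, (u (x * s) - u x)

/-- The gradient form `∇u∇v(x) = (1/2) Σ_{s ∈ S} (u(xs)-u(x))(v(xs)-v(x))`. -/
def grad [Group G] (S : Finset G) (u v : G → ℝ) (x : G) : ℝ :=
  (1 / 2) * ∑ s ∈ S, (u (x * s) - u x) * (v (x * s) - v x)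

/-- The density `|Δu|² + |∇u|² + (1 + λa)u²`. -/
def eDensity [Group G] (S : Finset G) (a : G → ℝ) (lam : ℝ) (u : G → ℝ) (x : G) : ℝ :=
  (lap S u x) ^ 2 + grad S u u x + (1 + lam * a x) * (u x) ^ 2

/-- Membership in the space `E_λ`. -/
def MemE [Group G] (S : Finset G) (a : G → ℝ) (lam : ℝ) (u : G → ℝ) : Prop :=
  Summable (eDensity S a lam u)

/-- `‖u‖²_{E_λ}`. -/
def normEsq [Group G] (S : Finset G) (a : G → ℝ) (lam : ℝ) (u : G → ℝ) : ℝ :=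
  ∑' x, eDensity S a lam u x

/-- `‖u‖_{E_λ}`. -/
def normE [Group G] (S : Finset G) (a : G → ℝ) (lam : ℝ) (u : G → ℝ) : ℝ :=
  Real.sqrt (normEsq S a lam u)

/-- The inner product `⟨u, v⟩_{E_λ}`. -/
def innerE [Group G] (S : Finset G) (a : G → ℝ) (lam : ℝ) (u v : G → ℝ) : ℝ :=
  ∑' x, (lap S u x * lap S v x + grad S u v x + (1 + lam * a x) * (u x * v x))

/-- The nonlocal term `Σ_G (R_α ∗ |u|^p)|u|^p`. -/
def Dterm [DecidableEq G] (R : G → G → ℝ) (p : ℝ) (u : G → ℝ) : ℝ :=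
  ∑' x, conv R (fun y => |u y| ^ p) x * |u x| ^ p

/-- The nonlocal pairing `Σ_G (R_α ∗ |u|^p)|u|^{p-2} u v`. -/
def Kterm [DecidableEq G] (R : G → G → ℝ) (p : ℝ) (u v : G → ℝ) : ℝ :=
  ∑' x, conv R (fun y => |u y| ^ p) x * (|u x| ^ (p - 2) * u x * v x)

/-- The energy functional `J_λ`. -/
def Jfun [Group G] [DecidableEq G] (S : Finset G) (a : G → ℝ) (lam : ℝ)
    (R : G → G → ℝ) (p : ℝ) (u : G → ℝ) : ℝ :=
  (1 / 2) * normEsq S a lam u - (1 / (2 * p)) * Dterm R p u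

/-- The derivative pairing `(J'_λ(u), v)`. -/
def Jd [Group G] [DecidableEq G] (S : Finset G) (a : G → ℝ) (lam : ℝ)
    (R : G → G → ℝ) (p : ℝ) (u v : G → ℝ) : ℝ :=
  innerE S a lam u v - Kterm R p u v

/-- The Nehari manifold `N_λ`. -/
def nehari [Group G] [DecidableEq G] (S : Finset G) (a : G → ℝ) (lam : ℝ)
    (R : G → G → ℝ) (p : ℝ) : Set (G → ℝ) :=
  {u | MemE S a lam u ∧ u ≠ 0 ∧ Jd S a lam R p u u = 0}

/-- `m_λ = inf_{N_λ} J_λ`. -/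
def mlam [Group G] [DecidableEq G] (S : Finset G) (a : G → ℝ) (lam : ℝ)
    (R : G → G → ℝ) (p : ℝ) : ℝ :=
  sInf (Jfun S a lam R p '' nehari S a lam R p)

/-- The norm of `J'_λ(u)` in the dual space `E_λ*`. -/
def dualNorm [Group G] [DecidableEq G] (S : Finset G) (a : G → ℝ) (lam : ℝ)
    (R : G → G → ℝ) (p : ℝ) (u : G → ℝ) : ℝ :=
  sSup {t : ℝ | ∃ v, MemE S a lam v ∧ normEsq S a lam v ≤ 1 ∧ t = |Jd S a lam R p u v|}

/-- `(PS)_c` sequence for `J_λ`. -/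
def PSseq [Group G] [DecidableEq G] (S : Finset G) (a : G → ℝ) (lam : ℝ)
    (R : G → G → ℝ) (p : ℝ) (c : ℝ) (U : ℕ → G → ℝ) : Prop :=
  (∀ n, MemE S a lam (U n)) ∧
  Tendsto (fun n => Jfun S a lam R p (U n)) atTop (nhds c) ∧
  Tendsto (fun n => dualNorm S a lam R p (U n)) atTop (nhds 0)

/-- The Cayley graph of `(G, S)`. -/
def cayley [Group G] (S : Finset G) : SimpleGraph G :=
  SimpleGraph.fromRel (fun x y => x⁻¹ * y ∈ S)

/-- Condition (A₁): the potential well `Ω = {a = 0}` is nonempty, finite and connected. -/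
def CondA1 [Group G] (S : Finset G) (a : G → ℝ) : Prop :=
  {x | a x = 0}.Nonempty ∧ {x | a x = 0}.Finite ∧
  ((cayley S).induce {x | a x = 0}).Connected

/-- Condition (A₂): some sublevel set `{a ≤ M}` is finite and nonempty. -/
def CondA2 (a : G → ℝ) : Prop :=
  ∃ M : ℝ, 0 < M ∧ {x | a x ≤ M}.Finite ∧ {x | a x ≤ M}.Nonempty

/-- The density `|Δu|² + |∇u|² + u²` of the `W^{2,2}` norm. -/
def wDensity [Group G] (S : Finset G) (u : G → ℝ) (x : G) : ℝ :=
  (lap S u x) ^ 2 + grad S u u x + (u x) ^ 2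

/-- Membership in `W^{2,2}(G)`. -/
def MemW [Group G] (S : Finset G) (u : G → ℝ) : Prop := Summable (wDensity S u)

/-- `‖u‖²_{W^{2,2}}`. -/
def normWsq [Group G] (S : Finset G) (u : G → ℝ) : ℝ := ∑' x, wDensity S u x

/-- Membership in `E(Ω)`: vanishing outside `Ω`. -/
def MemEOm (Ω : Set G) (u : G → ℝ) : Prop := ∀ x ∉ Ω, u x = 0

/-- `‖u‖²_{E(Ω)}`. -/
def normOmSq [Group G] (S : Finset G) (Ω : Set G) (u : G → ℝ) : ℝ :=
  (∑' x, ((lap S u x) ^ 2 + grad S u u x)) + ∑' x : Ω, (u (x : G)) ^ 2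

/-- The nonlocal term over `Ω`. -/
def DtermOm [DecidableEq G] (Ω : Set G) (R : G → G → ℝ) (p : ℝ) (u : G → ℝ) : ℝ :=
  ∑' x : Ω, conv R (fun y => |u y| ^ p) (x : G) * |u (x : G)| ^ p

/-- The limiting energy functional `J_Ω`. -/
def JOm [Group G] [DecidableEq G] (S : Finset G) (Ω : Set G) (R : G → G → ℝ) (p : ℝ)
    (u : G → ℝ) : ℝ :=
  (1 / 2) * normOmSq S Ω u - (1 / (2 * p)) * DtermOm Ω R p u

/-- The derivative pairing `(J'_Ω(u), v)`. -/
def JdOm [Group G] [DecidableEq G] (S : Finset G) (Ω : Set G) (R : G → G → ℝ) (p : ℝ)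
    (u v : G → ℝ) : ℝ :=
  (∑' x, (lap S u x * lap S v x + grad S u v x)) + (∑' x : Ω, u (x : G) * v (x : G))
    - ∑' x : Ω, conv R (fun y => |u y| ^ p) (x : G) * (|u (x : G)| ^ (p - 2) * u (x : G) * v (x : G))

/-- The Nehari manifold `N_Ω`. -/
def nehariOm [Group G] [DecidableEq G] (S : Finset G) (Ω : Set G) (R : G → G → ℝ)
    (p : ℝ) : Set (G → ℝ) :=
  {u | MemEOm Ω u ∧ u ≠ 0 ∧ JdOm S Ω R p u u = 0}

/-- `m_Ω = inf_{N_Ω} J_Ω`. -/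
def mOm [Group G] [DecidableEq G] (S : Finset G) (Ω : Set G) (R : G → G → ℝ) (p : ℝ) : ℝ :=
  sInf (JOm S Ω R p '' nehariOm S Ω R p)

open scoped NNReal

lemma shell_sum {ι : Type*} (d : ι → ℝ≥0) (f : ι → ℝ≥0) (s c : ℕ → ℝ≥0) (V : ℝ≥0 → ℝ≥0)
    (hV : ∀ t : ℝ≥0, 0 < t →
      ∑' y, (if 0 < d y ∧ d y ≤ t then (1 : ℝ≥0∞) else 0) ≤ (V t : ℝ≥0))
    (hs : ∀ j, 0 < s j)
    (hf : ∀ y, f y ≠ 0 → ∃ j, (0 < d y ∧ d y ≤ s j) ∧ f y ≤ c j)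
    (a q : ℝ≥0) (hq : q < 1) (hc : ∀ j, c j * V (s j) = a * q ^ j) :
    ∑' y, (f y : ℝ≥0∞) ≤ ((a * (1 - q)⁻¹ : ℝ≥0) : ℝ≥0∞) := by
  calc ∑' y, (f y : ℝ≥0∞)
      ≤ ∑' y, ∑' j, (c j : ℝ≥0∞) * (if 0 < d y ∧ d y ≤ s j then (1 : ℝ≥0∞) else 0) := by
        refine ENNReal.tsum_le_tsum fun y => ?_
        by_cases h0 : f y = 0
        · simp [h0]
        obtain ⟨j, h1, h2⟩ := hf y h0
        refine le_trans ?_ (ENNReal.le_tsum j)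
        rw [if_pos h1, mul_one]
        exact_mod_cast h2
    _ = ∑' j, (c j : ℝ≥0∞) * ∑' y, (if 0 < d y ∧ d y ≤ s j then (1 : ℝ≥0∞) else 0) := by
        rw [ENNReal.tsum_comm]
        simp_rw [ENNReal.tsum_mul_left]
    _ ≤ ∑' j, (a : ℝ≥0∞) * (q : ℝ≥0∞) ^ j := by
        refine ENNReal.tsum_le_tsum fun j => ?_
        refine le_trans (mul_le_mul_right (hV _ (hs j)) _) ?_
        rw [← ENNReal.coe_mul, hc j]
        push_cast
        exact le_rfl
    _ = _ := by
        rw [ENNReal.tsum_mul_left, ENNReal.tsum_geometric, ENNReal.coe_mul, ENNReal.coe_inv]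
        · push_cast; rfl
        · exact (tsub_pos_of_lt hq).ne'

lemma near_sum {ι : Type*} (N β : ℝ) (h0 : 0 < β) (hβ : β < N) (C : ℝ≥0) :
    ∃ A : ℝ≥0, ∀ d : ι → ℝ≥0, (∀ t : ℝ≥0, 0 < t →
      ∑' y, (if 0 < d y ∧ d y ≤ t then (1 : ℝ≥0∞) else 0) ≤ ((C * t ^ N : ℝ≥0) : ℝ≥0∞)) →
    ∀ ρ : ℝ≥0, 0 < ρ →
      ∑' y, (((if d y ≤ ρ then (d y) ^ (-β) else 0) : ℝ≥0) : ℝ≥0∞)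
        ≤ ((A * ρ ^ (N - β) : ℝ≥0) : ℝ≥0∞) := by
  refine ⟨C * 2 ^ β * (1 - (2⁻¹ : ℝ≥0) ^ (N - β))⁻¹, fun d hV ρ hρ => ?_⟩
  have hq : (2⁻¹ : ℝ≥0) ^ (N - β) < 1 :=
    NNReal.rpow_lt_one (by rw [inv_lt_one₀] <;> norm_num) (by linarith)
  refine le_trans (shell_sum d _ (fun j => ρ * 2⁻¹ ^ j) (fun j => (ρ * 2⁻¹ ^ (j+1)) ^ (-β))
    (fun t => C * t ^ N) hV (fun j => by positivity) ?_ (C * 2 ^ β * ρ ^ (N - β))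
    ((2⁻¹ : ℝ≥0) ^ (N - β)) hq ?_) (le_of_eq ?_)
  · intro y hy
    have h1 : d y ≤ ρ := by
      by_contra h; simp [h] at hy
    have h2 : 0 < d y := by
      rw [pos_iff_ne_zero]; intro h
      rw [if_pos h1, h, NNReal.zero_rpow (by linarith)] at hy
      exact hy rfl
    obtain ⟨j, hj1, hj2⟩ := exists_nat_pow_near_of_lt_one (x := d y / ρ) (y := (2⁻¹ : ℝ≥0))
      (by positivity) (by rw [div_le_one hρ]; exact h1) (by positivity)
      (by rw [inv_lt_one₀] <;> norm_num)
    refine ⟨j, ⟨h2, ?_⟩, ?_⟩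
    · rw [div_le_iff₀ hρ] at hj2; rwa [mul_comm]
    · rw [if_pos h1]
      rw [lt_div_iff₀ hρ] at hj1
      rw [NNReal.rpow_neg, NNReal.rpow_neg]
      gcongr
      rw [mul_comm]; exact hj1.le
  · intro j
    have e1 : (2⁻¹ : ℝ≥0) ^ j = 2 ^ (-(j : ℝ)) := by
      rw [NNReal.rpow_neg, NNReal.rpow_natCast, inv_pow]
    have e2 : (2⁻¹ : ℝ≥0) ^ (j+1) = 2 ^ (-(j : ℝ) - 1) := by
      rw [pow_succ, e1, NNReal.rpow_sub (by norm_num), NNReal.rpow_one, div_eq_mul_inv]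
    have e3 : ((2⁻¹ : ℝ≥0) ^ (N - β)) ^ j = 2 ^ (-(j : ℝ) * (N - β)) := by
      rw [← NNReal.rpow_natCast, ← NNReal.rpow_mul, NNReal.inv_rpow, ← NNReal.rpow_neg]
      congr 1; ring
    simp only [e1, e2, e3]
    have h2 : (2 : ℝ≥0) ≠ 0 := by norm_num
    rw [NNReal.mul_rpow, NNReal.mul_rpow, ← NNReal.rpow_mul, ← NNReal.rpow_mul, sub_eq_add_neg N,
      NNReal.rpow_add hρ.ne']
    have : (2:ℝ≥0) ^ ((-(j:ℝ) - 1) * -β) * 2 ^ (-(j:ℝ) * N) = 2 ^ β * 2 ^ (-(j:ℝ) * (N + -β)) := by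
      rw [← NNReal.rpow_add h2, ← NNReal.rpow_add h2]; congr 1; ring
    calc _ = C * ρ ^ N * ρ ^ (-β) * ((2:ℝ≥0) ^ ((-(j:ℝ) - 1) * -β) * 2 ^ (-(j:ℝ) * N)) := by ring
      _ = _ := by rw [this]; ring
  · norm_cast; ring

lemma far_sum {ι : Type*} (N γ : ℝ) (h0 : 0 < N) (hγ : N < γ) (C : ℝ≥0) :
    ∃ A : ℝ≥0, ∀ d : ι → ℝ≥0, (∀ t : ℝ≥0, 0 < t →
      ∑' y, (if 0 < d y ∧ d y ≤ t then (1 : ℝ≥0∞) else 0) ≤ ((C * t ^ N : ℝ≥0) : ℝ≥0∞)) →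
    ∀ ρ : ℝ≥0, 0 < ρ →
      ∑' y, (((if d y ≤ ρ then 0 else (d y) ^ (-γ)) : ℝ≥0) : ℝ≥0∞)
        ≤ ((A * ρ ^ (N - γ) : ℝ≥0) : ℝ≥0∞) := by
  have h2 : (2 : ℝ≥0) ≠ 0 := by norm_num
  refine ⟨C * 2 ^ N * (1 - (2 : ℝ≥0) ^ (N - γ))⁻¹, fun d hV ρ hρ => ?_⟩
  have hq : (2 : ℝ≥0) ^ (N - γ) < 1 :=
    NNReal.rpow_lt_one_of_one_lt_of_neg (by norm_num) (by linarith)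
  refine le_trans (shell_sum d _ (fun j => ρ * 2 ^ (j+1)) (fun j => (ρ * 2 ^ j) ^ (-γ))
    (fun t => C * t ^ N) hV (fun j => by positivity) ?_ (C * 2 ^ N * ρ ^ (N - γ))
    ((2 : ℝ≥0) ^ (N - γ)) hq ?_) (le_of_eq ?_)
  · intro y hy
    have h1 : ¬ d y ≤ ρ := by
      intro h; simp [h] at hy
    rw [if_neg h1]
    rw [not_le] at h1
    obtain ⟨j, hj1, hj2⟩ := exists_nat_pow_near (x := d y / ρ) (y := (2 : ℝ≥0))
      (by rw [one_le_div hρ]; exact h1.le) (by norm_num)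
    refine ⟨j, ⟨hρ.trans h1, ?_⟩, ?_⟩
    · rw [div_lt_iff₀ hρ] at hj2; rw [mul_comm]; exact hj2.le
    · rw [le_div_iff₀ hρ] at hj1
      rw [NNReal.rpow_neg, NNReal.rpow_neg]
      gcongr
      · linarith
      · rw [mul_comm]; exact hj1
  · intro j
    have e1 : (2 : ℝ≥0) ^ j = 2 ^ (j : ℝ) := by
      rw [NNReal.rpow_natCast]
    have e2 : (2 : ℝ≥0) ^ (j+1) = 2 ^ ((j : ℝ) + 1) := by
      rw [pow_succ, e1, NNReal.rpow_add (by norm_num), NNReal.rpow_one]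
    have e3 : ((2 : ℝ≥0) ^ (N - γ)) ^ j = 2 ^ ((j : ℝ) * (N - γ)) := by
      rw [← NNReal.rpow_natCast, ← NNReal.rpow_mul]
      congr 1; ring
    simp only [e1, e2, e3]
    rw [NNReal.mul_rpow, NNReal.mul_rpow, ← NNReal.rpow_mul, ← NNReal.rpow_mul, sub_eq_add_neg N,
      NNReal.rpow_add hρ.ne']
    have : (2:ℝ≥0) ^ ((j:ℝ) * -γ) * 2 ^ (((j:ℝ) + 1) * N) = 2 ^ N * 2 ^ ((j:ℝ) * (N + -γ)) := by
      rw [← NNReal.rpow_add h2, ← NNReal.rpow_add h2]; congr 1; ring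
    calc _ = C * ρ ^ N * ρ ^ (-γ) * ((2:ℝ≥0) ^ ((j:ℝ) * -γ) * 2 ^ (((j:ℝ) + 1) * N)) := by ring
      _ = _ := by rw [this]; ring
  · norm_cast; ring

def BB {G : Type*} (k : G → G → ℝ≥0) (f g : G → ℝ≥0) : ℝ≥0∞ :=
  ∑' x, ∑' y, ((k x y * f x * g y : ℝ≥0) : ℝ≥0∞)

lemma young_simple (a b : ℝ≥0) {p q : ℝ} (hpq : p.HolderConjugate q) :
    a * b ≤ a ^ p + b ^ q := by
  refine (NNReal.young_inequality_real a b hpq).trans ?_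
  gcongr
  · exact div_le_self zero_le (by rw [Real.one_le_toNNReal]; exact hpq.lt.le)
  · exact div_le_self zero_le (by rw [Real.one_le_toNNReal]; exact hpq.symm.lt.le)

lemma young_kernel (N β r : ℝ) (h0 : 0 < β) (hβ : β < N) (hr : r = 2 * N / (2 * N - β))
    (t D h : ℝ≥0) (ht : 0 < t) :
    D ^ (-β) * h ≤ t⁻¹ * D ^ (-(2 * N)) + t ^ (r - 1) * h ^ r := by
  have hpos : 0 < 2 * N - β := by linarith
  have hN : 0 < N := by linarith
  have hc : (2 * N / β).HolderConjugate r := by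
    rw [Real.holderConjugate_iff]
    refine ⟨by rw [lt_div_iff₀ h0]; linarith, ?_⟩
    rw [hr]; field_simp; ring
  have key := young_simple (t ^ (-(β / (2 * N))) * D ^ (-β)) (t ^ (β / (2 * N)) * h) hc
  have e1 : (t ^ (-(β / (2 * N))) * D ^ (-β)) * (t ^ (β / (2 * N)) * h) = D ^ (-β) * h := by
    calc _ = (t ^ (-(β / (2 * N))) * t ^ (β / (2 * N))) * (D ^ (-β) * h) := by ring
      _ = _ := by rw [← NNReal.rpow_add ht.ne']; simp
  have e2 : (t ^ (-(β / (2 * N))) * D ^ (-β)) ^ (2 * N / β) = t⁻¹ * D ^ (-(2 * N)) := by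
    rw [NNReal.mul_rpow, ← NNReal.rpow_mul, ← NNReal.rpow_mul, ← NNReal.rpow_neg_one]
    congr 2 <;> field_simp
  have e3 : (t ^ (β / (2 * N)) * h) ^ r = t ^ (r - 1) * h ^ r := by
    rw [NNReal.mul_rpow, ← NNReal.rpow_mul]
    congr 2
    rw [hr]; field_simp; ring
  rwa [e1, e2, e3] at key

lemma row_bound {G : Type*} (N β r : ℝ) (h0 : 0 < β) (hβ : β < N)
    (hr : r = 2 * N / (2 * N - β)) (C : ℝ≥0) :
    ∃ A : ℝ≥0, ∀ d : G → ℝ≥0, (∀ t : ℝ≥0, 0 < t →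
      ∑' y, (if 0 < d y ∧ d y ≤ t then (1 : ℝ≥0∞) else 0) ≤ ((C * t ^ N : ℝ≥0) : ℝ≥0∞)) →
    ∀ (h : G → ℝ≥0) (t : ℝ≥0), 0 < t →
      ∑' y, (((if h y ≤ t then (d y) ^ (-β) * h y else 0) : ℝ≥0) : ℝ≥0∞)
        ≤ ((t ^ (r - 1) : ℝ≥0) : ℝ≥0∞) * (A + ∑' y, ((h y ^ r : ℝ≥0) : ℝ≥0∞)) := by
  have hpos : 0 < 2 * N - β := by linarith
  have hN : 0 < N := by linarith
  obtain ⟨A₁, hA₁⟩ := near_sum (ι := G) N β h0 hβ C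
  obtain ⟨A₂, hA₂⟩ := far_sum (ι := G) N (2 * N) hN (by linarith) C
  refine ⟨A₁ + A₂, fun d hV h t ht => ?_⟩
  have hρ : 0 < t ^ (-(r / N)) := NNReal.rpow_pos ht
  have n1 := hA₁ d hV _ hρ
  have n2 := hA₂ d hV _ hρ
  generalize hρd : t ^ (-(r / N)) = ρ at *
  have e1 : t * ρ ^ (N - β) = t ^ (r - 1) := by
    rw [← hρd, ← NNReal.rpow_mul]
    nth_rewrite 1 [← NNReal.rpow_one t]
    rw [← NNReal.rpow_add ht.ne']
    congr 1; rw [hr]; field_simp; ring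
  have e2 : t⁻¹ * ρ ^ (N - 2 * N) = t ^ (r - 1) := by
    rw [← hρd, ← NNReal.rpow_mul, ← NNReal.rpow_neg_one, ← NNReal.rpow_add ht.ne']
    congr 1; field_simp; ring
  calc ∑' y, (((if h y ≤ t then (d y) ^ (-β) * h y else 0) : ℝ≥0) : ℝ≥0∞)
      ≤ ∑' y, ((t : ℝ≥0∞) * (((if d y ≤ ρ then (d y) ^ (-β) else 0) : ℝ≥0) : ℝ≥0∞)
          + ((t⁻¹ : ℝ≥0) : ℝ≥0∞) * (((if d y ≤ ρ then 0 else (d y) ^ (-(2 * N))) : ℝ≥0) : ℝ≥0∞)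
          + ((t ^ (r - 1) : ℝ≥0) : ℝ≥0∞) * ((h y ^ r : ℝ≥0) : ℝ≥0∞)) := by
        refine ENNReal.tsum_le_tsum fun y => ?_
        norm_cast
        by_cases hy : h y ≤ t
        · rw [if_pos hy]
          by_cases hd : d y ≤ ρ
          · simp only [if_pos hd, mul_zero, add_zero]
            refine le_trans ?_ le_self_add
            rw [mul_comm]; gcongr
          · simp only [if_neg hd, mul_zero, zero_add]
            exact young_kernel N β r h0 hβ hr t (d y) (h y) ht
        · rw [if_neg hy]; exact zero_le
    _ ≤ (t : ℝ≥0∞) * ((A₁ * ρ ^ (N - β) : ℝ≥0) : ℝ≥0∞)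
          + ((t⁻¹ : ℝ≥0) : ℝ≥0∞) * ((A₂ * ρ ^ (N - 2 * N) : ℝ≥0) : ℝ≥0∞)
          + ((t ^ (r - 1) : ℝ≥0) : ℝ≥0∞) * ∑' y, ((h y ^ r : ℝ≥0) : ℝ≥0∞) := by
        rw [ENNReal.tsum_add, ENNReal.tsum_add, ENNReal.tsum_mul_left, ENNReal.tsum_mul_left,
          ENNReal.tsum_mul_left]
        gcongr
    _ = _ := by
        rw [← ENNReal.coe_mul, ← ENNReal.coe_mul, mul_add]
        congr 1
        rw [← ENNReal.coe_add, ← ENNReal.coe_mul]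
        congr 1
        rw [mul_left_comm, e1, mul_left_comm, e2]; ring

lemma hls_quad {G : Type*} (N β r : ℝ) (h0 : 0 < β) (hβ : β < N)
    (hr : r = 2 * N / (2 * N - β)) (C : ℝ≥0) :
    ∃ A : ℝ≥0, ∀ d : G → G → ℝ≥0, (∀ x y, d x y = d y x) → (∀ x, ∀ t : ℝ≥0, 0 < t →
      ∑' y, (if 0 < d x y ∧ d x y ≤ t then (1 : ℝ≥0∞) else 0) ≤ ((C * t ^ N : ℝ≥0) : ℝ≥0∞)) →
    ∀ h : G → ℝ≥0,
      BB (fun x y => (d x y) ^ (-β)) h h ≤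
        2 * ((A + ∑' y, ((h y ^ r : ℝ≥0) : ℝ≥0∞)) * ∑' y, ((h y ^ r : ℝ≥0) : ℝ≥0∞)) := by
  obtain ⟨A, hA⟩ := row_bound (G := G) N β r h0 hβ hr C
  refine ⟨A, fun d hsymm hV h => ?_⟩
  have hr1 : r ≠ 0 := by
    rw [hr]; have : 0 < 2 * N - β := by linarith
    have : 0 < N := by linarith
    positivity
  set H := ∑' y, ((h y ^ r : ℝ≥0) : ℝ≥0∞) with hH
  set T : ℝ≥0∞ := ∑' x, ∑' y,
    (((if h y ≤ h x then (d x y) ^ (-β) * h x * h y else 0) : ℝ≥0) : ℝ≥0∞) with hT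
  have hTle : T ≤ (A + H) * H := by
    rw [hT, hH, ← ENNReal.tsum_mul_left]
    refine ENNReal.tsum_le_tsum fun x => ?_
    by_cases hx : h x = 0
    · simp [hx]
    have hx' : 0 < h x := pos_iff_ne_zero.2 hx
    calc ∑' y, (((if h y ≤ h x then (d x y) ^ (-β) * h x * h y else 0) : ℝ≥0) : ℝ≥0∞)
        = (h x : ℝ≥0∞) *
          ∑' y, (((if h y ≤ h x then (d x y) ^ (-β) * h y else 0) : ℝ≥0) : ℝ≥0∞) := by
          rw [← ENNReal.tsum_mul_left]
          refine tsum_congr fun y => ?_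
          norm_cast
          split_ifs
          · ring
          · simp
      _ ≤ (h x : ℝ≥0∞) * (((h x ^ (r - 1) : ℝ≥0) : ℝ≥0∞) * (A + H)) := by
          gcongr
          exact hA (d x) (hV x) h (h x) hx'
      _ = (A + H) * ((h x ^ r : ℝ≥0) : ℝ≥0∞) := by
          rw [← mul_assoc, ← ENNReal.coe_mul, mul_comm]
          congr 2
          nth_rewrite 1 [← NNReal.rpow_one (h x)]
          rw [← NNReal.rpow_add hx]; congr 1; ring
  have hQ : BB (fun x y => (d x y) ^ (-β)) h h ≤ T + T := by
    have hT2 : T = ∑' x, ∑' y,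
      (((if h x ≤ h y then (d x y) ^ (-β) * h x * h y else 0) : ℝ≥0) : ℝ≥0∞) := by
      rw [hT, ENNReal.tsum_comm]
      refine tsum_congr fun x => tsum_congr fun y => ?_
      rw [hsymm y x]
      congr 1
      split_ifs
      · ring
      · rfl
    nth_rewrite 2 [hT2]
    rw [hT, ← ENNReal.tsum_add]
    refine ENNReal.tsum_le_tsum fun x => ?_
    rw [← ENNReal.tsum_add]
    refine ENNReal.tsum_le_tsum fun y => ?_
    norm_cast
    rcases le_total (h y) (h x) with hh | hh
    · rw [if_pos hh]; exact le_self_add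
    · rw [if_pos hh]; exact le_add_self
  calc _ ≤ T + T := hQ
    _ = 2 * T := (two_mul T).symm
    _ ≤ _ := by gcongr

lemma hls {G : Type*} (N β r : ℝ) (h0 : 0 < β) (hβ : β < N)
    (hr : r = 2 * N / (2 * N - β)) (C : ℝ≥0) (d : G → G → ℝ≥0)
    (hsymm : ∀ x y, d x y = d y x) (hV : ∀ x, ∀ t : ℝ≥0, 0 < t →
      ∑' y, (if 0 < d x y ∧ d x y ≤ t then (1 : ℝ≥0∞) else 0) ≤ ((C * t ^ N : ℝ≥0) : ℝ≥0∞)) :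
    ∃ A : ℝ≥0, ∀ (f g : G → ℝ≥0) (a b : ℝ≥0), 0 < a → 0 < b →
      ∑' y, ((f y ^ r : ℝ≥0) : ℝ≥0∞) ≤ ((a ^ r : ℝ≥0) : ℝ≥0∞) →
      ∑' y, ((g y ^ r : ℝ≥0) : ℝ≥0∞) ≤ ((b ^ r : ℝ≥0) : ℝ≥0∞) →
      BB (fun x y => (d x y) ^ (-β)) f g ≤ ((A * a * b : ℝ≥0) : ℝ≥0∞) := by
  obtain ⟨A, hA⟩ := hls_quad (G := G) N β r h0 hβ hr C
  have hr1 : 0 < r := by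
    rw [hr]; have : 0 < 2 * N - β := by linarith
    have : 0 < N := by linarith
    positivity
  refine ⟨2 * ((A + 2) * 2), fun f g a b ha hb hf hg => ?_⟩
  set h : G → ℝ≥0 := fun x => max (f x / a) (g x / b) with hh
  have hsum : ∑' y, ((h y ^ r : ℝ≥0) : ℝ≥0∞) ≤ 2 := by
    calc ∑' y, ((h y ^ r : ℝ≥0) : ℝ≥0∞)
        ≤ ∑' y, ((((a ^ r)⁻¹ : ℝ≥0) : ℝ≥0∞) * ((f y ^ r : ℝ≥0) : ℝ≥0∞)
          + (((b ^ r)⁻¹ : ℝ≥0) : ℝ≥0∞) * ((g y ^ r : ℝ≥0) : ℝ≥0∞)) := by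
          refine ENNReal.tsum_le_tsum fun y => ?_
          norm_cast
          simp only [hh]
          rcases le_total (f y / a) (g y / b) with h1 | h1
          · rw [max_eq_right h1, NNReal.div_rpow, div_eq_inv_mul]; exact le_add_self
          · rw [max_eq_left h1, NNReal.div_rpow, div_eq_inv_mul]; exact le_self_add
      _ ≤ (((a ^ r)⁻¹ : ℝ≥0) : ℝ≥0∞) * ((a ^ r : ℝ≥0) : ℝ≥0∞)
          + (((b ^ r)⁻¹ : ℝ≥0) : ℝ≥0∞) * ((b ^ r : ℝ≥0) : ℝ≥0∞) := by
          rw [ENNReal.tsum_add, ENNReal.tsum_mul_left, ENNReal.tsum_mul_left]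
          gcongr
      _ = 2 := by
          rw [← ENNReal.coe_mul, ← ENNReal.coe_mul,
            inv_mul_cancel₀ (NNReal.rpow_pos ha).ne', inv_mul_cancel₀ (NNReal.rpow_pos hb).ne']
          norm_num
  calc BB (fun x y => (d x y) ^ (-β)) f g
      ≤ ((a * b : ℝ≥0) : ℝ≥0∞) * BB (fun x y => (d x y) ^ (-β)) h h := by
        unfold BB
        rw [← ENNReal.tsum_mul_left]
        refine ENNReal.tsum_le_tsum fun x => ?_
        rw [← ENNReal.tsum_mul_left]
        refine ENNReal.tsum_le_tsum fun y => ?_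
        norm_cast
        have h1 : f x ≤ a * h x := by
          rw [← div_le_iff₀' ha]; exact le_max_left _ _
        have h2 : g y ≤ b * h y := by
          rw [← div_le_iff₀' hb]; exact le_max_right _ _
        calc _ ≤ d x y ^ (-β) * (a * h x) * (b * h y) := by gcongr
          _ = _ := by ring
    _ ≤ ((a * b : ℝ≥0) : ℝ≥0∞) * (2 * ((A + 2) * 2)) := by
        gcongr
        refine (hA d hsymm hV h).trans ?_
        gcongr
    _ = _ := by
        push_cast; ring

lemma dct_eps {G : Type*} (F V : ℕ → G → ℝ≥0) (W : G → ℝ≥0) (M : ℝ≥0)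
    (hV : ∀ n, ∑' x, (V n x : ℝ≥0∞) ≤ M) (hW : ∑' x, (W x : ℝ≥0∞) ≠ ⊤)
    (hF0 : ∀ x, Tendsto (fun n => F n x) atTop (nhds 0))
    (hFe : ∀ ε : ℝ≥0, 0 < ε → ∃ C : ℝ≥0, ∀ n x, F n x ≤ ε * V n x + C * W x) :
    Tendsto (fun n => ∑' x, (F n x : ℝ≥0∞)) atTop (nhds 0) := by
  rw [ENNReal.tendsto_nhds_zero]
  intro η hη
  obtain ⟨δ, hδ0, hδη⟩ := ENNReal.lt_iff_exists_nnreal_btwn.1 hη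
  have hδ : 0 < δ := by exact_mod_cast hδ0
  obtain ⟨C, hC⟩ := hFe (δ / 2 / (M + 1)) (by positivity)
  set ε := δ / 2 / (M + 1) with hε
  have hX : Tendsto (fun n => ∑' x, ((F n x - ε * V n x : ℝ≥0) : ℝ≥0∞)) atTop (nhds 0) := by
    let _ : MeasurableSpace G := ⊤
    have := MeasureTheory.tendsto_lintegral_of_dominated_convergence
      (μ := (MeasureTheory.Measure.count : MeasureTheory.Measure G))
      (F := fun n x => ((F n x - ε * V n x : ℝ≥0) : ℝ≥0∞)) (f := fun _ => 0)
      (fun x => ((C * W x : ℝ≥0) : ℝ≥0∞)) (fun n => measurable_from_top)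
      (fun n => Filter.Eventually.of_forall fun x => by
        simp only [ENNReal.coe_le_coe]
        rw [tsub_le_iff_left]; exact hC n x)
      (by
        rw [MeasureTheory.lintegral_count]
        simp only [ENNReal.coe_mul]
        rw [ENNReal.tsum_mul_left]
        exact ENNReal.mul_ne_top ENNReal.coe_ne_top hW)
      (Filter.Eventually.of_forall fun x => by
        rw [← ENNReal.coe_zero, ENNReal.tendsto_coe]
        exact tendsto_of_tendsto_of_tendsto_of_le_of_le tendsto_const_nhds (hF0 x)
          (fun n => zero_le) (fun n => tsub_le_self))
    simpa [MeasureTheory.lintegral_count] using this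
  have hev := (ENNReal.tendsto_nhds_zero.1 hX) ((δ / 2 : ℝ≥0) : ℝ≥0∞)
    (by exact_mod_cast (half_pos hδ))
  filter_upwards [hev] with n hn
  calc ∑' x, (F n x : ℝ≥0∞)
      ≤ ∑' x, (((F n x - ε * V n x : ℝ≥0) : ℝ≥0∞) + (ε : ℝ≥0∞) * (V n x : ℝ≥0∞)) := by
        refine ENNReal.tsum_le_tsum fun x => ?_
        norm_cast
        exact le_tsub_add
    _ ≤ ((δ / 2 : ℝ≥0) : ℝ≥0∞) + (ε : ℝ≥0∞) * (M : ℝ≥0∞) := by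
        rw [ENNReal.tsum_add, ENNReal.tsum_mul_left]
        gcongr
        exact hV n
    _ ≤ (δ : ℝ≥0∞) := by
        norm_cast
        have : ε * M ≤ δ / 2 := by
          rw [hε, div_mul_eq_mul_div]
          refine div_le_of_le_mul₀ zero_le zero_le ?_
          gcongr
          exact le_self_add
        calc _ ≤ δ / 2 + δ / 2 := by gcongr
          _ = δ := add_halves δ
    _ ≤ η := hδη.le

lemma weak_conv {G : Type*} {r s : ℝ} (hrs : r.HolderConjugate s) (φ : G → ℝ≥0)
    (v : ℕ → G → ℝ≥0) (M : ℝ≥0)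
    (hφ : ∑' x, ((φ x ^ s : ℝ≥0) : ℝ≥0∞) ≠ ⊤)
    (hv : ∀ n, ∑' x, ((v n x ^ r : ℝ≥0) : ℝ≥0∞) ≤ M)
    (hv0 : ∀ x, Tendsto (fun n => v n x) atTop (nhds 0)) :
    Tendsto (fun n => ∑' x, ((φ x * v n x : ℝ≥0) : ℝ≥0∞)) atTop (nhds 0) := by
  refine dct_eps _ (fun n x => v n x ^ r) (fun x => φ x ^ s) M hv hφ ?_ ?_
  · intro x
    simpa using (hv0 x).const_mul (φ x)
  · intro ε hε
    refine ⟨(ε ^ (-(1 / r))) ^ s, fun n x => ?_⟩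
    have := young_simple (ε ^ (1 / r) * v n x) (ε ^ (-(1 / r)) * φ x) hrs
    have e1 : (ε ^ (1 / r) * v n x) * (ε ^ (-(1 / r)) * φ x) = φ x * v n x := by
      calc _ = (ε ^ (1 / r) * ε ^ (-(1 / r))) * (φ x * v n x) := by ring
        _ = _ := by rw [← NNReal.rpow_add hε.ne']; simp
    rw [e1, NNReal.mul_rpow, NNReal.mul_rpow, ← NNReal.rpow_mul, one_div,
      inv_mul_cancel₀ hrs.ne_zero, NNReal.rpow_one] at this
    rw [one_div]
    exact this

lemma duality {G : Type*} {r s : ℝ} (hrs : r.HolderConjugate s) (φ : G → ℝ≥0) (A : ℝ≥0)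
    (h : ∀ (g : G → ℝ≥0) (b : ℝ≥0), 0 < b →
      ∑' y, ((g y ^ r : ℝ≥0) : ℝ≥0∞) ≤ ((b ^ r : ℝ≥0) : ℝ≥0∞) →
      ∑' y, ((φ y * g y : ℝ≥0) : ℝ≥0∞) ≤ ((A * b : ℝ≥0) : ℝ≥0∞)) :
    ∑' x, ((φ x ^ s : ℝ≥0) : ℝ≥0∞) ≠ ⊤ := by
  classical
  have hr := hrs.pos
  have hs := hrs.symm.pos
  suffices hh : ∑' x, ((φ x ^ s : ℝ≥0) : ℝ≥0∞) ≤ ((A ^ s : ℝ≥0) : ℝ≥0∞) from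
    ne_top_of_le_ne_top ENNReal.coe_ne_top hh
  rw [ENNReal.tsum_eq_iSup_sum]
  refine iSup_le fun T => ?_
  rw [← ENNReal.ofNNReal_finsetSum, ENNReal.coe_le_coe]
  set P := ∑ x ∈ T, φ x ^ s with hP
  by_cases hP0 : P = 0
  · rw [hP0]; exact zero_le
  have hPpos : 0 < P := pos_iff_ne_zero.2 hP0
  have e1 : ∀ y, (φ y ^ (s - 1)) ^ r = φ y ^ s := fun y => by
    rw [← NNReal.rpow_mul, hrs.symm.sub_one_mul_conj]
  have e2 : ∀ y, φ y * φ y ^ (s - 1) = φ y ^ s := fun y => by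
    by_cases hy : φ y = 0
    · rw [hy, NNReal.zero_rpow hs.ne', zero_mul]
    · nth_rewrite 1 [← NNReal.rpow_one (φ y)]
      rw [← NNReal.rpow_add hy]; congr 1; ring
  have key := h (fun y => if y ∈ T then φ y ^ (s - 1) else 0) (P ^ (1 / r))
    (NNReal.rpow_pos hPpos) ?_
  · rw [tsum_eq_sum (s := T) (fun y hy => by simp [hy]), ← ENNReal.ofNNReal_finsetSum,
      ENNReal.coe_le_coe] at key
    have : ∑ y ∈ T, φ y * (if y ∈ T then φ y ^ (s - 1) else 0) = P := by
      rw [hP]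
      refine Finset.sum_congr rfl fun y hy => ?_
      rw [if_pos hy, e2]
    rw [this] at key
    have h3 : P ^ (1 / s) ≤ A := by
      have : P = P ^ (1 / s) * P ^ (1 / r) := by
        rw [← NNReal.rpow_add hP0]
        have := hrs.symm.inv_add_inv_eq_one
        rw [one_div, one_div, this, NNReal.rpow_one]
      rw [this] at key
      have hh : P ^ (1 / s) * P ^ (1 / r) ≤ A * P ^ (1 / r) := by
        rw [← this]; rw [← this] at key; exact key
      exact le_of_mul_le_mul_right hh (NNReal.rpow_pos hPpos)
    calc P = (P ^ (1 / s)) ^ s := by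
          rw [← NNReal.rpow_mul, one_div, inv_mul_cancel₀ hs.ne', NNReal.rpow_one]
      _ ≤ A ^ s := NNReal.rpow_le_rpow h3 hs.le
  · rw [tsum_eq_sum (s := T) (fun y hy => by simp [hy, NNReal.zero_rpow hr.ne']),
      ← ENNReal.ofNNReal_finsetSum, ENNReal.coe_le_coe, ← NNReal.rpow_mul, one_div,
      inv_mul_cancel₀ hr.ne', NNReal.rpow_one, hP]
    refine le_of_eq (Finset.sum_congr rfl fun y hy => ?_)
    rw [if_pos hy, e1]

lemma BB_weak {G : Type*} {r s : ℝ} (hrs : r.HolderConjugate s) (k : G → G → ℝ≥0) (A : ℝ≥0)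
    (hA : ∀ (f g : G → ℝ≥0) (a b : ℝ≥0), 0 < a → 0 < b →
      ∑' y, ((f y ^ r : ℝ≥0) : ℝ≥0∞) ≤ ((a ^ r : ℝ≥0) : ℝ≥0∞) →
      ∑' y, ((g y ^ r : ℝ≥0) : ℝ≥0∞) ≤ ((b ^ r : ℝ≥0) : ℝ≥0∞) →
      BB k f g ≤ ((A * a * b : ℝ≥0) : ℝ≥0∞))
    (w : G → ℝ≥0) (a : ℝ≥0) (ha : 0 < a)
    (hw : ∑' y, ((w y ^ r : ℝ≥0) : ℝ≥0∞) ≤ ((a ^ r : ℝ≥0) : ℝ≥0∞))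
    (v : ℕ → G → ℝ≥0) (M : ℝ≥0)
    (hv : ∀ n, ∑' x, ((v n x ^ r : ℝ≥0) : ℝ≥0∞) ≤ M)
    (hv0 : ∀ x, Tendsto (fun n => v n x) atTop (nhds 0)) :
    Tendsto (fun n => BB k w (v n)) atTop (nhds 0) := by
  classical
  have hr := hrs.pos
  set Φ : G → ℝ≥0∞ := fun y => ∑' x, ((k x y * w x : ℝ≥0) : ℝ≥0∞) with hΦ
  have hB : ∀ g : G → ℝ≥0, BB k w g = ∑' y, Φ y * (g y : ℝ≥0∞) := fun g => by
    unfold BB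
    rw [ENNReal.tsum_comm]
    refine tsum_congr fun y => ?_
    rw [hΦ, ← ENNReal.tsum_mul_right]
    push_cast; rfl
  have hfin : ∀ y, Φ y ≠ ⊤ := fun y => by
    have h1 := hA w (fun z => if z = y then 1 else 0) a 1 ha one_pos hw (by
      rw [tsum_eq_single y (fun z hz => by simp [hz, NNReal.zero_rpow hr.ne'])]
      simp)
    rw [hB, tsum_eq_single y (fun z hz => by simp [hz])] at h1
    simp only [if_true, ENNReal.coe_one, mul_one] at h1
    exact ne_top_of_le_ne_top ENNReal.coe_ne_top h1
  have hB2 : ∀ g : G → ℝ≥0, BB k w g = ∑' y, (((Φ y).toNNReal * g y : ℝ≥0) : ℝ≥0∞) := fun g => by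
    rw [hB]
    refine tsum_congr fun y => ?_
    rw [ENNReal.coe_mul, ENNReal.coe_toNNReal (hfin y)]
  simp_rw [hB2]
  refine weak_conv hrs _ v M (duality hrs _ (A * a) fun g b hb hg => ?_) hv hv0
  rw [← hB2]
  exact hA w g a b ha hb hw hg

lemma BB_strong {G : Type*} {r : ℝ} (k : G → G → ℝ≥0) (A : ℝ≥0)
    (hA : ∀ (f g : G → ℝ≥0) (a b : ℝ≥0), 0 < a → 0 < b →
      ∑' y, ((f y ^ r : ℝ≥0) : ℝ≥0∞) ≤ ((a ^ r : ℝ≥0) : ℝ≥0∞) →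
      ∑' y, ((g y ^ r : ℝ≥0) : ℝ≥0∞) ≤ ((b ^ r : ℝ≥0) : ℝ≥0∞) →
      BB k f g ≤ ((A * a * b : ℝ≥0) : ℝ≥0∞))
    (E g : ℕ → G → ℝ≥0) (b : ℝ≥0) (hb : 0 < b)
    (hE : Tendsto (fun n => ∑' x, ((E n x ^ r : ℝ≥0) : ℝ≥0∞)) atTop (nhds 0))
    (hg : ∀ n, ∑' x, ((g n x ^ r : ℝ≥0) : ℝ≥0∞) ≤ ((b ^ r : ℝ≥0) : ℝ≥0∞)) :
    Tendsto (fun n => BB k (E n) (g n)) atTop (nhds 0) := by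
  rw [ENNReal.tendsto_nhds_zero]
  intro η hη
  obtain ⟨δ, hδ0, hδη⟩ := ENNReal.lt_iff_exists_nnreal_btwn.1 hη
  have hδ : 0 < δ := by exact_mod_cast hδ0
  have ha : 0 < δ / (A * b + 1) := by positivity
  have hev := (ENNReal.tendsto_nhds_zero.1 hE) (((δ / (A * b + 1)) ^ r : ℝ≥0) : ℝ≥0∞)
    (by exact_mod_cast NNReal.rpow_pos ha)
  filter_upwards [hev] with n hn
  refine (hA _ _ _ b ha hb hn (hg n)).trans (le_trans ?_ hδη.le)
  rw [ENNReal.coe_le_coe]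
  calc A * (δ / (A * b + 1)) * b = δ * (A * b) / (A * b + 1) := by ring
    _ ≤ δ := by
      refine div_le_of_le_mul₀ zero_le zero_le ?_
      gcongr
      exact le_self_add

lemma BB_symm {G : Type*} (k : G → G → ℝ≥0) (hk : ∀ x y, k x y = k y x) (f g : G → ℝ≥0) :
    BB k f g = BB k g f := by
  unfold BB
  rw [ENNReal.tsum_comm]
  refine tsum_congr fun x => tsum_congr fun y => ?_
  rw [hk y x]; congr 1; ring

lemma elem1 {p : ℝ} (hp : 1 < p) (ε : ℝ≥0) (hε : 0 < ε) :
    ∃ C : ℝ≥0, ∀ a b : ℝ≥0, (a + b) ^ p ≤ (1 + ε) * a ^ p + C * b ^ p := by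
  set w₁ : ℝ≥0 := (1 + ε) ^ (-(1 / (p - 1))) with hw₁
  have hp1 : 0 < p - 1 := by linarith
  have h1 : w₁ < 1 := by
    apply NNReal.rpow_lt_one_of_one_lt_of_neg
    · exact lt_add_of_pos_right 1 hε
    · rw [neg_lt_zero]; positivity
  have h0 : 0 < w₁ := NNReal.rpow_pos (by positivity)
  have h2 : 0 < 1 - w₁ := tsub_pos_of_lt h1
  refine ⟨(1 - w₁) * ((1 - w₁)⁻¹) ^ p, fun a b => ?_⟩
  have := NNReal.rpow_arith_mean_le_arith_mean2_rpow w₁ (1 - w₁) (w₁⁻¹ * a) ((1 - w₁)⁻¹ * b)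
    (add_tsub_cancel_of_le h1.le) hp.le
  rw [← mul_assoc, ← mul_assoc, mul_inv_cancel₀ h0.ne', mul_inv_cancel₀ h2.ne', one_mul, one_mul,
    NNReal.mul_rpow, NNReal.mul_rpow, ← mul_assoc, ← mul_assoc] at this
  convert this using 3
  have : w₁ * w₁⁻¹ ^ p = w₁ ^ (1 - p) := by
    rw [NNReal.inv_rpow, ← NNReal.rpow_neg]
    nth_rewrite 1 [← NNReal.rpow_one w₁]
    rw [← NNReal.rpow_add h0.ne']; rfl
  rw [this, hw₁, ← NNReal.rpow_mul]
  have : -(1 / (p - 1)) * (1 - p) = 1 := by field_simp; ring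
  rw [this, NNReal.rpow_one]

lemma elem2 {p : ℝ} (hp : 1 < p) (ε : ℝ≥0) (hε : 0 < ε) :
    ∃ C : ℝ≥0, ∀ a b : ℝ, ‖|a + b| ^ p - |a| ^ p - |b| ^ p‖₊ ≤
      ε * ‖a‖₊ ^ p + C * ‖b‖₊ ^ p := by
  obtain ⟨C, hC⟩ := elem1 hp ε hε
  refine ⟨C + 1, fun a b => ?_⟩
  have g1 : ‖a + b‖₊ ^ p ≤ (1 + ε) * ‖a‖₊ ^ p + C * ‖b‖₊ ^ p :=
    (NNReal.rpow_le_rpow (nnnorm_add_le a b) (by linarith)).trans (hC _ _)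
  have g2 : ‖a‖₊ ^ p ≤ (1 + ε) * ‖a + b‖₊ ^ p + C * ‖b‖₊ ^ p := by
    refine (NNReal.rpow_le_rpow ?_ (by linarith)).trans (hC _ _)
    calc ‖a‖₊ = ‖(a + b) + -b‖₊ := by congr 1; ring
      _ ≤ ‖a + b‖₊ + ‖-b‖₊ := nnnorm_add_le _ _
      _ = _ := by rw [nnnorm_neg]
  rw [← NNReal.coe_le_coe] at g1 g2 ⊢
  push_cast at g1 g2 ⊢
  simp only [Real.norm_eq_abs] at g1 g2 ⊢
  have hX : 0 ≤ |a + b| ^ p := by positivity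
  have hY : 0 ≤ |a| ^ p := by positivity
  have hZ : 0 ≤ |b| ^ p := by positivity
  have hc : (0:ℝ) ≤ C := C.2
  have he : (0:ℝ) ≤ ε := ε.2
  generalize |a + b| ^ p = X at *
  generalize |a| ^ p = Y at *
  generalize |b| ^ p = Z at *
  have hCZ := mul_nonneg hc hZ
  have heY := mul_nonneg he hY
  rw [abs_le]
  constructor
  · rcases le_total Y X with h | h
    · nlinarith
    · have := mul_le_mul_of_nonneg_left h he
      nlinarith
  · nlinarith

lemma elem3 {p r : ℝ} (hp : 1 < p) (hr : 1 ≤ r) (ε : ℝ≥0) (hε : 0 < ε) :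
    ∃ C : ℝ≥0, ∀ a b : ℝ, ‖|a + b| ^ p - |a| ^ p - |b| ^ p‖₊ ^ r ≤
      ε * (‖a‖₊ ^ p) ^ r + C * (‖b‖₊ ^ p) ^ r := by
  have h2 : (0 : ℝ≥0) < 2 ^ (r - 1) := NNReal.rpow_pos (by norm_num)
  obtain ⟨C, hC⟩ := elem2 hp ((ε / 2 ^ (r - 1)) ^ (1 / r)) (NNReal.rpow_pos (by positivity))
  refine ⟨2 ^ (r - 1) * C ^ r, fun a b => ?_⟩
  refine (NNReal.rpow_le_rpow (hC a b) (by linarith)).trans ?_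
  refine (NNReal.rpow_add_le_mul_rpow_add_rpow _ _ hr).trans (le_of_eq ?_)
  rw [NNReal.mul_rpow, NNReal.mul_rpow, ← NNReal.rpow_mul, one_div, inv_mul_cancel₀ (by linarith),
    NNReal.rpow_one]
  field_simp

section word
variable [Group G]

lemma wordDist_symm (S : Finset G) (hS : ∀ s ∈ S, s⁻¹ ∈ S) (x y : G) :
    wordDist S x y = wordDist S y x := by
  have key : ∀ x y : G, ∀ k, (∃ l : List G, (∀ g ∈ l, g ∈ S) ∧ l.length = k ∧ x⁻¹ * y = l.prod) →
      ∃ l : List G, (∀ g ∈ l, g ∈ S) ∧ l.length = k ∧ y⁻¹ * x = l.prod := by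
    rintro x y k ⟨l, h1, h2, h3⟩
    refine ⟨(l.map (·⁻¹)).reverse, ?_, by simpa using h2, ?_⟩
    · intro g hg
      simp only [List.mem_reverse, List.mem_map] at hg
      obtain ⟨a, ha, rfl⟩ := hg
      exact hS a (h1 a ha)
    · rw [← List.prod_inv_reverse, ← h3]; group
  unfold wordDist
  congr 1
  ext k
  exact ⟨key x y k, key y x k⟩

lemma wordDist_pos (S : Finset G) (hS : ∀ s ∈ S, s⁻¹ ∈ S)
    (hgen : Subgroup.closure (S : Set G) = ⊤) (x y : G) (hxy : x ≠ y) :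
    0 < wordDist S x y := by
  rw [pos_iff_ne_zero]
  intro h
  unfold wordDist at h
  rw [Nat.sInf_eq_zero] at h
  rcases h with ⟨l, -, h2, h3⟩ | h
  · rw [List.length_eq_zero_iff] at h2
    subst h2
    rw [List.prod_nil, inv_mul_eq_one] at h3
    exact hxy h3
  · have hm : x⁻¹ * y ∈ Subgroup.closure (S : Set G) := by rw [hgen]; trivial
    rw [← Subgroup.mem_toSubmonoid, Subgroup.closure_toSubmonoid] at hm
    obtain ⟨l, hl1, hl2⟩ := Submonoid.exists_list_of_mem_closure hm
    have : l.length ∈ ({k : ℕ | ∃ l : List G, (∀ g ∈ l, g ∈ S) ∧ l.length = k ∧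
        x⁻¹ * y = l.prod}) := by
      refine ⟨l, fun g hg => ?_, rfl, hl2.symm⟩
      rcases hl1 g hg with h1 | h1
      · exact h1
      · have := hS _ h1; rwa [inv_inv] at this
    rw [h] at this
    exact this

lemma wordDist_self (S : Finset G) (x : G) : wordDist S x x = 0 := by
  unfold wordDist
  rw [Nat.sInf_eq_zero]
  left
  exact ⟨[], by simp, rfl, by simp⟩

lemma volume_bound (S : Finset G) (N : ℕ) (hg : PolyGrowth S N) :
    ∃ C : ℝ≥0, ∀ x : G, ∀ t : ℝ≥0, 0 < t →
      ∑' y, (if 0 < (wordDist S x y : ℝ≥0) ∧ (wordDist S x y : ℝ≥0) ≤ t then (1 : ℝ≥0∞) else 0)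
        ≤ ((C * t ^ (N : ℝ) : ℝ≥0) : ℝ≥0∞) := by
  classical
  obtain ⟨C₁, C₂, h1, h2, h⟩ := hg
  refine ⟨C₂.toNNReal, fun x t ht => ?_⟩
  by_cases ht1 : t < 1
  · have : ∀ y, ¬ (0 < (wordDist S x y : ℝ≥0) ∧ (wordDist S x y : ℝ≥0) ≤ t) := by
      rintro y ⟨a, b⟩
      have a' : 1 ≤ wordDist S x y := by exact_mod_cast a
      have a'' : (1 : ℝ≥0) ≤ wordDist S x y := by exact_mod_cast a'
      exact absurd (a''.trans b) (not_le.2 ht1)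
    simp only [this, if_false, tsum_zero]; exact zero_le
  · have ht2 : (1 : ℝ) ≤ t := by exact_mod_cast not_lt.1 ht1
    obtain ⟨hl, hu⟩ := h t ht2
    have hfin : (ball S (1 : G) t).Finite := by
      by_contra hi
      rw [Set.Infinite.ncard hi] at hl
      have : 0 < C₁ * (t : ℝ) ^ N := by positivity
      simp at hl; linarith
    have e : ∀ y, wordDist S x y = wordDist S (y⁻¹ * x) 1 := fun y => by
      unfold wordDist; simp
    calc _ ≤ ∑' y, (if y⁻¹ * x ∈ ball S (1 : G) t then (1 : ℝ≥0∞) else 0) := by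
          refine ENNReal.tsum_le_tsum fun y => ?_
          split_ifs with ha hb hb
          · exact le_rfl
          · exfalso; apply hb
            change ((wordDist S (y⁻¹ * x) 1 : ℕ) : ℝ) ≤ t
            rw [← e]; exact_mod_cast ha.2
          · exact zero_le
          · exact le_rfl
      _ = ∑' z, (if z ∈ ball S (1 : G) t then (1 : ℝ≥0∞) else 0) :=
          ((Equiv.inv G).trans (Equiv.mulRight x)).tsum_eq
            (fun z => if z ∈ ball S (1 : G) t then (1 : ℝ≥0∞) else 0)
      _ = ((ball S (1 : G) t).ncard : ℝ≥0∞) := by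
          rw [tsum_eq_sum (s := hfin.toFinset) (fun z hz => by
            rw [if_neg]; simpa using hz)]
          rw [Finset.sum_congr rfl (g := fun _ => (1 : ℝ≥0∞)) (fun z hz => by
            rw [if_pos]; simpa using hz)]
          rw [Set.ncard_eq_toFinset_card _ hfin]
          simp
      _ ≤ _ := by
          rw [← ENNReal.coe_natCast, ENNReal.coe_le_coe, ← NNReal.coe_le_coe]
          push_cast
          rw [Real.coe_toNNReal _ h2.le, Real.rpow_natCast]
          exact hu

end word

lemma real_bound {ι : Type*} (F : ι → ℝ) (H : ι → ℝ≥0) (hF : ∀ i, |F i| ≤ H i)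
    (hH : ∑' i, (H i : ℝ≥0∞) ≠ ⊤) :
    Summable F ∧ |∑' i, F i| ≤ (∑' i, (H i : ℝ≥0∞)).toReal := by
  have hs : Summable H := ENNReal.tsum_coe_ne_top_iff_summable.1 hH
  have hs' : Summable (fun i => (H i : ℝ)) := NNReal.summable_coe.2 hs
  refine ⟨Summable.of_norm_bounded hs' hF, ?_⟩
  rw [← ENNReal.coe_tsum hs]
  rw [ENNReal.coe_toReal, NNReal.coe_tsum]
  rw [← Real.norm_eq_abs]
  exact tsum_of_norm_bounded hs'.hasSum (fun i => by rw [Real.norm_eq_abs]; exact hF i)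

section final
variable [DecidableEq G]

/-- The off-diagonal kernel. -/
def kk (R : G → G → ℝ) (x y : G) : ℝ := if y = x then 0 else R x y

lemma tsum_prod_BB (k : G → G → ℝ≥0) (f g : G → ℝ≥0) :
    ∑' z : G × G, ((k z.1 z.2 * f z.1 * g z.2 : ℝ≥0) : ℝ≥0∞) = BB k f g :=
  ENNReal.tsum_prod (f := fun x y => ((k x y * f x * g y : ℝ≥0) : ℝ≥0∞))

lemma Dterm_eq (R : G → G → ℝ) (k : G → G → ℝ≥0) (c : ℝ≥0) (p : ℝ)
    (hk : ∀ x y, |kk R x y| ≤ c * k x y) (f : G → ℝ)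
    (hf : BB k (fun x => ‖f x‖₊ ^ p) (fun x => ‖f x‖₊ ^ p) ≠ ⊤) :
    Summable (fun z : G × G => kk R z.1 z.2 * |f z.1| ^ p * |f z.2| ^ p) ∧
    Dterm R p f = ∑' z : G × G, kk R z.1 z.2 * |f z.1| ^ p * |f z.2| ^ p := by
  have hs : Summable (fun z : G × G => kk R z.1 z.2 * |f z.1| ^ p * |f z.2| ^ p) := by
    refine (real_bound _ (fun z : G × G => c * (k z.1 z.2 * ‖f z.1‖₊ ^ p * ‖f z.2‖₊ ^ p))
      (fun z => ?_) ?_).1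
    · push_cast
      simp only [Real.norm_eq_abs]
      have h1 : 0 ≤ |f z.1| ^ p := by positivity
      have h2 : 0 ≤ |f z.2| ^ p := by positivity
      rw [abs_mul, abs_mul, abs_of_nonneg h1, abs_of_nonneg h2]
      calc _ ≤ (c * k z.1 z.2 : ℝ) * |f z.1| ^ p * |f z.2| ^ p := by
            gcongr; exact hk _ _
        _ = _ := by ring
    · simp_rw [ENNReal.coe_mul c]
      rw [ENNReal.tsum_mul_left,
        tsum_prod_BB k (fun x => ‖f x‖₊ ^ p) (fun x => ‖f x‖₊ ^ p)]
      exact ENNReal.mul_ne_top ENNReal.coe_ne_top hf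
  refine ⟨hs, ?_⟩
  rw [hs.tsum_prod]
  unfold Dterm conv
  refine tsum_congr fun x => ?_
  rw [← tsum_mul_right]
  refine tsum_congr fun y => ?_
  unfold kk
  split_ifs
  · simp
  · ring

end final

theorem brezis_lieb_nonlocal
    {G : Type*} [Group G] [Countable G] [DecidableEq G]
    (S : Finset G) (hSsymm : ∀ s ∈ S, s⁻¹ ∈ S)
    (hSgen : Subgroup.closure (S : Set G) = ⊤)
    (N : ℕ) (hN : 2 ≤ N) (hgrowth : PolyGrowth S N)
    (α : ℝ) (hα0 : 0 < α) (hαN : α < (N : ℝ))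
    (R : G → G → ℝ) (hR : RieszKernel S N α R)
    (p : ℝ) (hp : ((N : ℝ) + α) / (N : ℝ) < p)
    (U : ℕ → G → ℝ) (u : G → ℝ)
    (hbdd : ∃ C : ℝ, ∀ n, Memlp (2 * (N : ℝ) * p / ((N : ℝ) + α)) (U n) ∧
      lpNorm (2 * (N : ℝ) * p / ((N : ℝ) + α)) (U n) ≤ C)
    (hptwise : ∀ x, Tendsto (fun n => U n x) atTop (nhds (u x))) :
    Tendsto (fun n => Dterm R p (U n) - Dterm R p (U n - u)) atTop
      (nhds (Dterm R p u)) := by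
  -- exponents
  have hNpos : (0 : ℝ) < N := by linarith
  have hNα : 0 < (N : ℝ) + α := by linarith
  have hp1 : 1 < p := by
    refine lt_trans ?_ hp
    rw [lt_div_iff₀ hNpos]; linarith
  obtain ⟨q, hq⟩ : ∃ q : ℝ, q = 2 * (N : ℝ) * p / ((N : ℝ) + α) := ⟨_, rfl⟩
  obtain ⟨r, hr⟩ : ∃ r : ℝ, r = 2 * (N : ℝ) / ((N : ℝ) + α) := ⟨_, rfl⟩
  obtain ⟨s, hs⟩ : ∃ s : ℝ, s = 2 * (N : ℝ) / ((N : ℝ) - α) := ⟨_, rfl⟩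
  have hNα' : 0 < (N : ℝ) - α := by linarith
  have hr1 : 1 < r := by rw [hr, lt_div_iff₀ hNα]; linarith
  have hr0 : 0 < r := by linarith
  have hqr : q = p * r := by rw [hq, hr]; ring
  have hq1 : 1 < q := by rw [hqr]; nlinarith
  have hrs : r.HolderConjugate s := by
    rw [Real.holderConjugate_iff]
    refine ⟨hr1, ?_⟩
    rw [hr, hs]; field_simp; ring
  have hpow : ∀ a : ℝ≥0, (a ^ p) ^ r = a ^ q := fun a => by rw [← NNReal.rpow_mul, hqr]
  rw [← hq] at hbdd
  -- kernel
  obtain ⟨CV, hCV⟩ := volume_bound S N hgrowth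
  obtain ⟨hRpos, c₁, c₂, hc₁, hc₂, hRb⟩ := hR
  set k : G → G → ℝ≥0 := fun x y => (wordDist S x y : ℝ≥0) ^ (-((N : ℝ) - α)) with hk
  obtain ⟨A, hA⟩ := hls (G := G) (N : ℝ) ((N : ℝ) - α) r hNα' (by linarith)
    (by rw [hr]; congr 1; ring) CV (fun x y => (wordDist S x y : ℝ≥0))
    (fun x y => by rw [wordDist_symm S hSsymm]) hCV
  change ∀ (f g : G → ℝ≥0) (a b : ℝ≥0), 0 < a → 0 < b →
      ∑' y, ((f y ^ r : ℝ≥0) : ℝ≥0∞) ≤ ((a ^ r : ℝ≥0) : ℝ≥0∞) →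
      ∑' y, ((g y ^ r : ℝ≥0) : ℝ≥0∞) ≤ ((b ^ r : ℝ≥0) : ℝ≥0∞) →
      BB k f g ≤ ((A * a * b : ℝ≥0) : ℝ≥0∞) at hA
  have hksymm : ∀ x y, k x y = k y x := fun x y => by
    simp only [hk]; rw [wordDist_symm S hSsymm]
  have hkk : ∀ x y, |kk R x y| ≤ (c₂.toNNReal : ℝ) * k x y := by
    intro x y
    unfold kk
    split_ifs with h
    · rw [abs_zero]; positivity
    · rw [abs_of_pos (hRpos x y), Real.coe_toNNReal _ hc₂.le]
      have := (hRb x y (fun h' => h h'.symm)).2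
      simp only [hk]
      push_cast
      rw [neg_sub]
      exact this
  -- uniform bounds
  obtain ⟨M, hM⟩ : ∃ M : ℝ≥0, ∀ n, ∑' x, ((‖U n x‖₊ ^ q : ℝ≥0) : ℝ≥0∞) ≤ M := by
    obtain ⟨C, hC⟩ := hbdd
    refine ⟨(C ^ q).toNNReal, fun n => ?_⟩
    obtain ⟨h1, h2⟩ := hC n
    unfold Memlp at h1
    unfold lpNorm at h2
    have hnn : 0 ≤ ∑' x, |U n x| ^ q := tsum_nonneg fun x => by positivity
    have h3 : ∑' x, |U n x| ^ q ≤ C ^ q := by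
      calc ∑' x, |U n x| ^ q = ((∑' x, |U n x| ^ q) ^ (1 / q)) ^ q := by
            rw [← Real.rpow_mul hnn, one_div, inv_mul_cancel₀ (by linarith), Real.rpow_one]
        _ ≤ C ^ q := Real.rpow_le_rpow (by positivity) h2 (by linarith)
    have h4 : ∑' x, ((‖U n x‖₊ ^ q : ℝ≥0) : ℝ≥0∞) = ENNReal.ofReal (∑' x, |U n x| ^ q) := by
      rw [ENNReal.ofReal_tsum_of_nonneg (fun x => by positivity) h1]
      refine tsum_congr fun x => ?_
      rw [ENNReal.ofReal]
      congr 1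
      rw [← NNReal.coe_inj, Real.coe_toNNReal _ (by positivity)]
      push_cast
      rw [Real.norm_eq_abs]
    rw [h4]
    exact ENNReal.ofReal_le_ofReal h3
  have hMu : ∑' x, ((‖u x‖₊ ^ q : ℝ≥0) : ℝ≥0∞) ≤ M := by
    rw [ENNReal.tsum_eq_iSup_sum]
    refine iSup_le fun T => ?_
    have ht : Tendsto (fun n => ∑ x ∈ T, ((‖U n x‖₊ ^ q : ℝ≥0) : ℝ≥0∞)) atTop
        (nhds (∑ x ∈ T, ((‖u x‖₊ ^ q : ℝ≥0) : ℝ≥0∞))) := by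
      refine tendsto_finsetSum _ fun x _ => ?_
      rw [ENNReal.tendsto_coe]
      exact ((NNReal.continuous_rpow_const (by linarith : 0 ≤ q)).tendsto _).comp
        ((hptwise x).nnnorm)
    exact le_of_tendsto' ht fun n => (ENNReal.sum_le_tsum T).trans (hM n)
  obtain ⟨M', hM'⟩ : ∃ M' : ℝ≥0, M' = 2 ^ (q - 1) * (M + M) := ⟨_, rfl⟩
  have hMv : ∀ n, ∑' x, ((‖U n x - u x‖₊ ^ q : ℝ≥0) : ℝ≥0∞) ≤ M' := by
    intro n
    calc ∑' x, ((‖U n x - u x‖₊ ^ q : ℝ≥0) : ℝ≥0∞)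
        ≤ ∑' x, ((2 ^ (q - 1) : ℝ≥0) : ℝ≥0∞) * (((‖U n x‖₊ ^ q : ℝ≥0) : ℝ≥0∞)
            + ((‖u x‖₊ ^ q : ℝ≥0) : ℝ≥0∞)) := by
          refine ENNReal.tsum_le_tsum fun x => ?_
          rw [← ENNReal.coe_add, ← ENNReal.coe_mul, ENNReal.coe_le_coe]
          exact (NNReal.rpow_le_rpow (nnnorm_sub_le _ _) (by linarith)).trans
            (NNReal.rpow_add_le_mul_rpow_add_rpow _ _ hq1.le)
      _ ≤ ((2 ^ (q - 1) : ℝ≥0) : ℝ≥0∞) * (M + M) := by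
          rw [ENNReal.tsum_mul_left, ENNReal.tsum_add]
          gcongr
          exact hM n
      _ = M' := by rw [hM', ENNReal.coe_mul, ENNReal.coe_add]
  obtain ⟨b, hb, hbr⟩ : ∃ b : ℝ≥0, 0 < b ∧ b ^ r = M + M' + 1 := by
    refine ⟨(M + M' + 1) ^ (1 / r), NNReal.rpow_pos (by positivity), ?_⟩
    rw [← NNReal.rpow_mul, one_div, inv_mul_cancel₀ hr0.ne', NNReal.rpow_one]
  -- the relevant functions
  set w : G → ℝ≥0 := fun x => ‖u x‖₊ ^ p with hw
  set wn : ℕ → G → ℝ≥0 := fun n x => ‖U n x‖₊ ^ p with hwn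
  set v : ℕ → G → ℝ≥0 := fun n x => ‖U n x - u x‖₊ ^ p with hv
  set E : ℕ → G → ℝ≥0 := fun n x => ‖|U n x| ^ p - |U n x - u x| ^ p - |u x| ^ p‖₊ with hE
  have hMb : (M : ℝ≥0∞) ≤ ((b ^ r : ℝ≥0) : ℝ≥0∞) := by
    rw [hbr, ENNReal.coe_le_coe, add_assoc]; exact le_self_add
  have hMb' : (M' : ℝ≥0∞) ≤ ((b ^ r : ℝ≥0) : ℝ≥0∞) := by
    rw [hbr, ENNReal.coe_le_coe, add_comm M, add_assoc]; exact le_self_add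
  have bw : ∑' x, ((w x ^ r : ℝ≥0) : ℝ≥0∞) ≤ ((b ^ r : ℝ≥0) : ℝ≥0∞) := by
    simp only [hw, hpow]; exact hMu.trans hMb
  have bwn : ∀ n, ∑' x, ((wn n x ^ r : ℝ≥0) : ℝ≥0∞) ≤ ((b ^ r : ℝ≥0) : ℝ≥0∞) := fun n => by
    simp only [hwn, hpow]; exact (hM n).trans hMb
  have bv : ∀ n, ∑' x, ((v n x ^ r : ℝ≥0) : ℝ≥0∞) ≤ ((b ^ r : ℝ≥0) : ℝ≥0∞) := fun n => by
    simp only [hv, hpow]; exact (hMv n).trans hMb'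
  have hdiff : ∀ x, Tendsto (fun n => U n x - u x) atTop (nhds 0) := fun x => by
    simpa using (hptwise x).sub_const (u x)
  have hv0 : ∀ x, Tendsto (fun n => v n x) atTop (nhds 0) := fun x => by
    have := ((NNReal.continuous_rpow_const (by linarith : 0 ≤ p)).tendsto _).comp
      ((hdiff x).nnnorm)
    simpa [hv, NNReal.zero_rpow (by linarith : p ≠ 0), Function.comp_def] using this
  have hcont : Continuous fun a : ℝ => |a| ^ p :=
    continuous_abs.rpow_const fun _ => Or.inr (by linarith)
  have hE0 : ∀ x, Tendsto (fun n => E n x) atTop (nhds 0) := fun x => by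
    have h1 : Tendsto (fun n => |U n x| ^ p - |U n x - u x| ^ p - |u x| ^ p) atTop
        (nhds (|u x| ^ p - |(0:ℝ)| ^ p - |u x| ^ p)) :=
      (((hcont.tendsto _).comp (hptwise x)).sub ((hcont.tendsto _).comp (hdiff x))).sub_const _
    have h2 := h1.nnnorm
    simpa [Real.zero_rpow (by linarith : p ≠ 0)] using h2
  have hEsum : Tendsto (fun n => ∑' x, ((E n x ^ r : ℝ≥0) : ℝ≥0∞)) atTop (nhds 0) := by
    refine dct_eps (fun n x => E n x ^ r) (fun n x => v n x ^ r) (fun x => w x ^ r) (b ^ r) bv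
      (ne_top_of_le_ne_top ENNReal.coe_ne_top bw) (fun x => ?_) (fun ε hε => ?_)
    · have := ((NNReal.continuous_rpow_const hr0.le).tendsto _).comp (hE0 x)
      simpa [NNReal.zero_rpow hr0.ne', Function.comp_def] using this
    · obtain ⟨C, hC⟩ := elem3 hp1 hr1.le ε hε
      refine ⟨C, fun n x => ?_⟩
      have := hC (U n x - u x) (u x)
      rw [sub_add_cancel] at this
      exact this
  -- the limits of the bilinear terms
  have L1 : Tendsto (fun n => BB k w (v n)) atTop (nhds 0) :=
    BB_weak hrs k A hA w b hb bw v (b ^ r) bv hv0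
  have L2 : Tendsto (fun n => BB k (v n) w) atTop (nhds 0) := by
    simp_rw [BB_symm k hksymm _ w]; exact L1
  have L3 : Tendsto (fun n => BB k (E n) (wn n)) atTop (nhds 0) :=
    BB_strong k A hA E wn b hb hEsum bwn
  have L4 : Tendsto (fun n => BB k (v n) (E n)) atTop (nhds 0) := by
    simp_rw [fun n => BB_symm k hksymm (v n) (E n)]
    exact BB_strong k A hA E v b hb hEsum bv
  have L5 : Tendsto (fun n => BB k w (E n)) atTop (nhds 0) := by
    simp_rw [fun n => BB_symm k hksymm w (E n)]
    exact BB_strong k A hA E (fun _ => w) b hb hEsum (fun _ => bw)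
  have L : Tendsto (fun n => (c₂.toNNReal : ℝ≥0∞) * (BB k w (v n) + BB k (v n) w
      + BB k (E n) (wn n) + BB k (v n) (E n) + BB k w (E n))) atTop (nhds 0) := by
    have := ENNReal.Tendsto.const_mul (a := (c₂.toNNReal : ℝ≥0∞))
      ((((L1.add L2).add L3).add L4).add L5) (Or.inr ENNReal.coe_ne_top)
    simpa using this
  have fin : ∀ f g : G → ℝ≥0, ∑' x, ((f x ^ r : ℝ≥0) : ℝ≥0∞) ≤ ((b ^ r : ℝ≥0) : ℝ≥0∞) →
      ∑' x, ((g x ^ r : ℝ≥0) : ℝ≥0∞) ≤ ((b ^ r : ℝ≥0) : ℝ≥0∞) → BB k f g ≠ ⊤ :=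
    fun f g hf hg => ne_top_of_le_ne_top ENNReal.coe_ne_top (hA f g b b hb hb hf hg)
  obtain ⟨su, eu⟩ := Dterm_eq R k c₂.toNNReal p hkk u (fin w w bw bw)
  have hUn := fun n => Dterm_eq R k c₂.toNNReal p hkk (U n) (fin _ _ (bwn n) (bwn n))
  have hVn := fun n => Dterm_eq R k c₂.toNNReal p hkk (U n - u) (fin _ _ (bv n) (bv n))
  have Lfin : ∀ᶠ n in atTop, (c₂.toNNReal : ℝ≥0∞) * (BB k w (v n) + BB k (v n) w
      + BB k (E n) (wn n) + BB k (v n) (E n) + BB k w (E n)) ≠ ⊤ := by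
    filter_upwards [L.eventually_lt_const ENNReal.zero_lt_top] with n hn using hn.ne
  have Lreal := (ENNReal.tendsto_toReal ENNReal.zero_ne_top).comp L
  rw [ENNReal.toReal_zero] at Lreal
  rw [tendsto_iff_norm_sub_tendsto_zero]
  refine tendsto_of_tendsto_of_tendsto_of_le_of_le' tendsto_const_nhds Lreal
    (Filter.Eventually.of_forall fun n => norm_nonneg _) ?_
  filter_upwards [Lfin] with n hn
  obtain ⟨s1, e1⟩ := hUn n
  obtain ⟨s2, e2⟩ := hVn n
  have hsum : ∑' z : G × G, ((c₂.toNNReal * (k z.1 z.2 * w z.1 * v n z.2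
      + k z.1 z.2 * v n z.1 * w z.2 + k z.1 z.2 * E n z.1 * wn n z.2
      + k z.1 z.2 * v n z.1 * E n z.2 + k z.1 z.2 * w z.1 * E n z.2) : ℝ≥0) : ℝ≥0∞)
      = (c₂.toNNReal : ℝ≥0∞) * (BB k w (v n) + BB k (v n) w
      + BB k (E n) (wn n) + BB k (v n) (E n) + BB k w (E n)) := by
    simp_rw [ENNReal.coe_mul c₂.toNNReal, ENNReal.coe_add]
    rw [ENNReal.tsum_mul_left, ENNReal.tsum_add, ENNReal.tsum_add, ENNReal.tsum_add,
      ENNReal.tsum_add]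
    simp only [tsum_prod_BB]
  have key := (real_bound (fun z : G × G => kk R z.1 z.2 * |U n z.1| ^ p * |U n z.2| ^ p
      - kk R z.1 z.2 * |(U n - u) z.1| ^ p * |(U n - u) z.2| ^ p
      - kk R z.1 z.2 * |u z.1| ^ p * |u z.2| ^ p) _ (fun z => ?_) (hsum ▸ hn)).2
  · rw [hsum, (s1.sub s2).tsum_sub su, s1.tsum_sub s2, ← e1, ← e2, ← eu] at key
    exact key
  · obtain ⟨x, y⟩ := z
    simp only [Pi.sub_apply]
    push_cast
    simp only [hw, hwn, hv, hE]
    push_cast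
    simp only [Real.norm_eq_abs]
    have hkxy := hkk x y
    have a1 : 0 ≤ |U n x| ^ p := by positivity
    have a2 : 0 ≤ |U n y| ^ p := by positivity
    have a3 : 0 ≤ |U n x - u x| ^ p := by positivity
    have a4 : 0 ≤ |U n y - u y| ^ p := by positivity
    have a5 : 0 ≤ |u x| ^ p := by positivity
    have a6 : 0 ≤ |u y| ^ p := by positivity
    generalize |U n x| ^ p = X at *
    generalize |U n y| ^ p = Y at *
    generalize |U n x - u x| ^ p = vx at *
    generalize |U n y - u y| ^ p = vy at *
    generalize |u x| ^ p = wx at *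
    generalize |u y| ^ p = wy at *
    have : kk R x y * X * Y - kk R x y * vx * vy - kk R x y * wx * wy
        = kk R x y * (wx * vy + vx * wy + (X - vx - wx) * Y + vx * (Y - vy - wy)
          + wx * (Y - vy - wy)) := by ring
    rw [this, abs_mul]
    calc _ ≤ ((c₂.toNNReal : ℝ) * k x y) * (wx * vy + vx * wy + |X - vx - wx| * Y
          + vx * |Y - vy - wy| + wx * |Y - vy - wy|) := by
          refine mul_le_mul hkxy ?_ (abs_nonneg _) (by positivity)
          refine (abs_add_le _ _).trans (add_le_add ((abs_add_le _ _).trans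
            (add_le_add ((abs_add_le _ _).trans (add_le_add ((abs_add_le _ _).trans
            (add_le_add ?_ ?_)) ?_)) ?_)) ?_)
          · rw [abs_of_nonneg (by positivity)]
          · rw [abs_of_nonneg (by positivity)]
          · rw [abs_mul, abs_of_nonneg a2]
          · rw [abs_mul, abs_of_nonneg a3]
          · rw [abs_mul, abs_of_nonneg a5]
      _ = _ := by ring

end Choquard
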